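/- Weight verification in the extrapolation proof (Case $q_n>p_n$): Let $1\le p_i\le\infty$ for $1\le i\le n-1$, $1<p_n<q_n\le\infty$, $1/p=\sum_{i=1}^n 1/p_i>0$, $1/q=1/p-1/p_n+1/q_n>0$ and $1/s=1/p_n-1/q_n$. Let $\widehat w,\widehat\lambda$ be weights on $\mathbb{R}^{d_1}\times\mathbb{R}^{d_2}$, let $w_n$ be a weight, and set $W_w=w_n\widehat w^{1/q_n'}$, $W_\lambda=w_n\widehat\lambda^{1/q_n'}$. Assume $W_w\in A_{q_n,q}(\widehat w)$, and let $H$ be an a.e. positive function satisfying the $A_1$ control $\big[w_n^{\frac{q_n'}{1+q_n'/q}}(W_\lambda^q\widehat\lambda)^{\frac{1}{1+q_n'/q}}H^{\frac{s}{p(1+q_n'/q)}}\big]_{A_1(\widehat w)}\le N$. Then the weight $v_n:=H^{1/p}W_\lambda^{q/p}\widehat\lambda^{-1/p_n'}$ satisfies $v_n\widehat w^{1/p_n'}\in A_{p_n,p}(\widehat w)$ with $[v_n\widehat w^{1/p_n'}]_{A_{p_n,p}(\widehat w)}\le C(N)\,[W_w]_{A_{q_n,q}(\widehat w)}^{q_n'/p_n'}$.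 -/

import Mathlib

open MeasureTheory ENNReal
open scoped Classical

noncomputable section

/-- A point of the bi-parameter space `ℝ^{d₁} × ℝ^{d₂}`. -/
abbrev Pt (d₁ d₂ : ℕ) := (Fin d₁ → ℝ) × (Fin d₂ → ℝ)

/-- The axis-parallel cube with corner `a` and side length `h`. -/
def cubeOf {d : ℕ} (a : Fin d → ℝ) (h : ℝ) : Set (Fin d → ℝ) :=
  Set.univ.pi fun i => Set.Ico (a i) (a i + h)

/-- An axis-parallel cube in `ℝ^d` (with positive side length). -/
def IsCube {d : ℕ} (I : Set (Fin d → ℝ)) : Prop :=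
  ∃ a h, 0 < h ∧ I = cubeOf a h

/-- A rectangle `R = I¹ × I²`: a product of axis-parallel cubes. -/
def IsRect {d₁ d₂ : ℕ} (R : Set (Pt d₁ d₂)) : Prop :=
  ∃ I₁ I₂, IsCube I₁ ∧ IsCube I₂ ∧ R = I₁ ×ˢ I₂

/-- A standard dyadic cube `2^{-k}([0,1)^d + m)`. -/
def IsDyadicCube {d : ℕ} (I : Set (Fin d → ℝ)) : Prop :=
  ∃ (k : ℤ) (m : Fin d → ℤ),
    I = Set.univ.pi fun i => Set.Ico ((2:ℝ) ^ (-k) * m i) ((2:ℝ) ^ (-k) * (m i + 1))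

/-- A standard dyadic rectangle. -/
def IsDyadicRect {d₁ d₂ : ℕ} (R : Set (Pt d₁ d₂)) : Prop :=
  ∃ I₁ I₂, IsDyadicCube I₁ ∧ IsDyadicCube I₂ ∧ R = I₁ ×ˢ I₂

variable {X : Type*} [MeasureSpace X]

/-- `ℝ≥0∞`-valued average `⟨f⟩_R` of a (nonnegative) function over `R`. -/
def avgE (R : Set X) (f : X → ℝ) : ℝ≥0∞ :=
  (∫⁻ x in R, ENNReal.ofReal (f x)) / volume R

/-- essential supremum of a (nonnegative) function on `R`. -/
def essSupE (R : Set X) (f : X → ℝ) : ℝ≥0∞ :=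
  essSup (fun x => ENNReal.ofReal (f x)) (volume.restrict R)

/-- real-valued average `⟨f⟩_R`. -/
def avgR (R : Set X) (f : X → ℝ) : ℝ :=
  (∫ x in R, f x) / (volume R).toReal

/-- Hölder conjugate exponent on `ℝ≥0∞`. -/
def dualExp (p : ℝ≥0∞) : ℝ≥0∞ :=
  if p = 1 then ∞ else if p = ∞ then 1 else ENNReal.ofReal (p.toReal / (p.toReal - 1))

/-- `⟨w^p⟩_R^{1/p}`, interpreted as `ess sup_R w` when `p = ∞`. -/
def mainFactor (R : Set X) (w : X → ℝ) (p : ℝ≥0∞) : ℝ≥0∞ :=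
  if p = ∞ then essSupE R w
  else (avgE R fun x => w x ^ p.toReal) ^ (1 / p.toReal)

/-- `⟨w^{-p'}⟩_R^{1/p'}`, interpreted as `ess sup_R w⁻¹` when `p = 1`. -/
def dualFactor (R : Set X) (w : X → ℝ) (p : ℝ≥0∞) : ℝ≥0∞ :=
  if p = 1 then essSupE R fun x => (w x)⁻¹
  else (avgE R fun x => w x ^ (-(dualExp p).toReal)) ^ (1 / (dualExp p).toReal)

/-- `A_r` ratio on a set, `1 ≤ r < ∞`, with the `A_1` interpretation at `r = 1`. -/
def ArRatio (r : ℝ≥0∞) (R : Set X) (v : X → ℝ) : ℝ≥0∞ :=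
  if r = 1 then avgE R v * essSupE R (fun x => (v x)⁻¹)
  else avgE R v * (avgE R fun x => v x ^ (-(1 / (r.toReal - 1)))) ^ (r.toReal - 1)

/-- Bi-parameter `A_r` characteristic: supremum over all rectangles. -/
def ArRect {d₁ d₂ : ℕ} (r : ℝ≥0∞) (v : Pt d₁ d₂ → ℝ) : ℝ≥0∞ :=
  ⨆ (R : Set (Pt d₁ d₂)) (_ : IsRect R), ArRatio r R v

/-- One-parameter `A_r` characteristic: supremum over all cubes. -/
def ArCube {d : ℕ} (r : ℝ≥0∞) (v : (Fin d → ℝ) → ℝ) : ℝ≥0∞ :=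
  ⨆ (I : Set (Fin d → ℝ)) (_ : IsCube I), ArRatio r I v

/-- `A_∞` ratio `⟨v⟩_R exp(⟨log v⁻¹⟩_R)`. -/
def AinftyRatio (R : Set X) (v : X → ℝ) : ℝ≥0∞ :=
  avgE R v * ENNReal.ofReal (Real.exp (avgR R fun x => Real.log (v x)⁻¹))

/-- Bi-parameter `A_∞` characteristic. -/
def AinftyRect {d₁ d₂ : ℕ} (v : Pt d₁ d₂ → ℝ) : ℝ≥0∞ :=
  ⨆ (R : Set (Pt d₁ d₂)) (_ : IsRect R), AinftyRatio R v

/-- Multilinear `A_{\vec p}` ratio `⟨w^p⟩_R^{1/p} ∏_i ⟨w_i^{-p_i'}⟩_R^{1/p_i'}`. -/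
def AvecRatio {n : ℕ} (p : Fin n → ℝ≥0∞) (w : Fin n → X → ℝ) (R : Set X) : ℝ≥0∞ :=
  mainFactor R (fun x => ∏ i, w i x) (∑ i, (p i)⁻¹)⁻¹ * ∏ i, dualFactor R (w i) (p i)

/-- Multilinear bi-parameter `A_{\vec p}` characteristic. -/
def AvecRect {d₁ d₂ n : ℕ} (p : Fin n → ℝ≥0∞) (w : Fin n → Pt d₁ d₂ → ℝ) : ℝ≥0∞ :=
  ⨆ (R : Set (Pt d₁ d₂)) (_ : IsRect R), AvecRatio p w R

/-- `A^*_{\vec p}` ratio: `⟨w⟩_R ⟨w_{n+1}^{-p}⟩_R^{1/p} ∏_{i=1}^n ⟨w_i^{-p_i'}⟩_R^{1/p_i'}`. -/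
def AstarRatio {n : ℕ} (p : Fin n → ℝ≥0∞) (w : Fin n → X → ℝ) (wl : X → ℝ) (R : Set X) :
    ℝ≥0∞ :=
  avgE R (fun x => (∏ i, w i x) * wl x) *
    (avgE R fun x => wl x ^ (-((∑ i, (p i)⁻¹)⁻¹).toReal)) ^ (∑ i, (p i)⁻¹).toReal *
    ∏ i, dualFactor R (w i) (p i)

/-- `A^*_{\vec p}` characteristic. -/
def AstarRect {d₁ d₂ n : ℕ} (p : Fin n → ℝ≥0∞) (w : Fin n → Pt d₁ d₂ → ℝ)
    (wl : Pt d₁ d₂ → ℝ) : ℝ≥0∞ :=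
  ⨆ (R : Set (Pt d₁ d₂)) (_ : IsRect R), AstarRatio p w wl R

/-- `μ`-weighted `ℝ≥0∞`-valued average over `R`. -/
def wAvg (R : Set X) (μ f : X → ℝ) : ℝ≥0∞ :=
  (∫⁻ x in R, ENNReal.ofReal (f x) * ENNReal.ofReal (μ x)) /
    (∫⁻ x in R, ENNReal.ofReal (μ x))

/-- `A_{q_n,q}(μ)` ratio, with ess sup interpretations when `q = ∞` or `q_n = 1`. -/
def AqRatio (qn q : ℝ≥0∞) (μ V : X → ℝ) (R : Set X) : ℝ≥0∞ :=
  (if q = ∞ then essSupE R V else (wAvg R μ fun x => V x ^ q.toReal) ^ (1 / q.toReal)) *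
  (if qn = 1 then essSupE R (fun x => (V x)⁻¹)
   else (wAvg R μ fun x => V x ^ (-(dualExp qn).toReal)) ^ (1 / (dualExp qn).toReal))

/-- `A_{q_n,q}(μ)` characteristic: supremum over rectangles. -/
def AqRect {d₁ d₂ : ℕ} (qn q : ℝ≥0∞) (μ V : Pt d₁ d₂ → ℝ) : ℝ≥0∞ :=
  ⨆ (R : Set (Pt d₁ d₂)) (_ : IsRect R), AqRatio qn q μ V R

/-- `μ`-weighted `A_1` characteristic of `u`: `sup_R ⟨u⟩_R^μ · ess sup_R u⁻¹`. -/
def A1wRect {d₁ d₂ : ℕ} (μ u : Pt d₁ d₂ → ℝ) : ℝ≥0∞ :=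
  ⨆ (R : Set (Pt d₁ d₂)) (_ : IsRect R), wAvg R μ u * essSupE R (fun x => (u x)⁻¹)

/-- `L^p` norm of an `ℝ≥0∞`-valued function, `0 < p ≤ ∞`. -/
def eNorm (g : X → ℝ≥0∞) (p : ℝ≥0∞) : ℝ≥0∞ :=
  if p = ∞ then essSup g volume else (∫⁻ x, g x ^ p.toReal) ^ (1 / p.toReal)

/-- `L^s(λ)` norm of an `ℝ≥0∞`-valued function, `0 < s < ∞`. -/
def eNormW (g : X → ℝ≥0∞) (s : ℝ) (lam : X → ℝ) : ℝ≥0∞ :=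
  (∫⁻ x, g x ^ s * ENNReal.ofReal (lam x)) ^ (1 / s)

/-- weak `L^p` quasinorm with respect to the measure `μ`. -/
def weakNorm {α : Type*} [MeasurableSpace α] (g : α → ℝ) (p : ℝ) (μ : Measure α) : ℝ≥0∞ :=
  ⨆ (t : ℝ) (_ : 0 < t), ENNReal.ofReal t * (μ {x | t < |g x|}) ^ (1 / p)

end

lemma wAvg_eq_zero_of {X : Type*} [MeasureSpace X] (R : Set X) (μ f : X → ℝ) (hμ : Measurable μ)
    (h : (∫⁻ x in R, ENNReal.ofReal (μ x)) = 0 ∨ (∫⁻ x in R, ENNReal.ofReal (μ x)) = ∞) :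
    wAvg R μ f = 0 := by
  unfold wAvg
  rcases h with h | h
  · have h2 : (∫⁻ x in R, ENNReal.ofReal (f x) * ENNReal.ofReal (μ x)) = 0 := by
      rw [lintegral_eq_zero_iff (by fun_prop)] at h
      rw [← lintegral_zero (μ := volume.restrict R)]
      apply lintegral_congr_ae
      filter_upwards [h] with x hx
      simp only [Pi.zero_apply] at hx
      simp [hx]
    simp [h2]
  · simp [h]

lemma core_main {X : Type*} [MeasureSpace X] (R : Set X) (μ u W V : X → ℝ)
    (hμ : Measurable μ) (hu : Measurable u) (hW : Measurable W)
    (hup : ∀ᵐ x ∂(volume.restrict R), 0 < u x) (hWp : ∀ᵐ x ∂(volume.restrict R), 0 < W x)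
    (κ β p q : ℝ) (hκ : 0 < κ) (hβ : 0 < β) (hp : 0 < p) (hq : 0 < q)
    (hV : ∀ᵐ x ∂(volume.restrict R), V x = u x ^ κ * W x ^ β)
    (h1 : κ * p + β * p / q = 1)
    (h0 : (∫⁻ x in R, ENNReal.ofReal (μ x)) ≠ 0) (hi : (∫⁻ x in R, ENNReal.ofReal (μ x)) ≠ ∞) :
    wAvg R μ (fun x => V x ^ p) ≤ (wAvg R μ u) ^ (κ * p) *
      (wAvg R μ (fun x => W x ^ q)) ^ (β * p / q) := by
  have e1 : 0 ≤ κ * p := by positivity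
  have e2 : 0 ≤ β * p / q := by positivity
  unfold wAvg
  set B := ∫⁻ x in R, ENNReal.ofReal (μ x)
  rw [ENNReal.div_rpow_of_nonneg _ _ e1, ENNReal.div_rpow_of_nonneg _ _ e2]
  have hH := ENNReal.lintegral_mul_norm_pow_le (μ := volume.restrict R)
    (f := fun x => ENNReal.ofReal (u x) * ENNReal.ofReal (μ x))
    (g := fun x => ENNReal.ofReal (W x ^ q) * ENNReal.ofReal (μ x))
    (by fun_prop) (by fun_prop) e1 e2 h1
  have hB : B = B ^ (κ * p) * B ^ (β * p / q) := by
    rw [← ENNReal.rpow_add_of_nonneg _ _ e1 e2, h1, ENNReal.rpow_one]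
  have hE : (∫⁻ x in R, ENNReal.ofReal (V x ^ p) * ENNReal.ofReal (μ x)) =
      ∫⁻ x in R, (ENNReal.ofReal (u x) * ENNReal.ofReal (μ x)) ^ (κ * p) *
        (ENNReal.ofReal (W x ^ q) * ENNReal.ofReal (μ x)) ^ (β * p / q) := by
    apply lintegral_congr_ae
    filter_upwards [hup, hWp, hV] with x hx hx2 hx3
    rw [ENNReal.mul_rpow_of_nonneg _ _ e1, ENNReal.mul_rpow_of_nonneg _ _ e2,
      mul_mul_mul_comm, ← ENNReal.rpow_add_of_nonneg _ _ e1 e2, h1, ENNReal.rpow_one,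
      ENNReal.ofReal_rpow_of_pos hx, ENNReal.ofReal_rpow_of_pos (by positivity),
      ← ENNReal.ofReal_mul (p := u x ^ (κ * p)) (by positivity), hx3, Real.mul_rpow (by positivity) (by positivity),
      ← Real.rpow_mul hx.le, ← Real.rpow_mul hx2.le, ← Real.rpow_mul hx2.le,
      mul_div_cancel₀ _ hq.ne']
  have hb1 : B ^ (κ * p) ≠ 0 := (ENNReal.rpow_pos (pos_iff_ne_zero.2 h0) hi).ne'
  have hb2 : B ^ (κ * p) ≠ ∞ := ENNReal.rpow_ne_top_of_nonneg e1 hi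
  rw [hE]
  conv_lhs => rw [hB]
  refine (ENNReal.div_le_div_right hH _).trans (le_of_eq ?_)
  simp only [div_eq_mul_inv]
  rw [ENNReal.mul_inv (Or.inl hb1) (Or.inl hb2)]
  ring

lemma core_dual {X : Type*} [MeasureSpace X] (R : Set X) (μ u W V : X → ℝ)
    (hμ : Measurable μ) (hW : Measurable W)
    (hup : ∀ᵐ x ∂(volume.restrict R), 0 < u x) (hWp : ∀ᵐ x ∂(volume.restrict R), 0 < W x)
    (κ β a b : ℝ) (hκ : 0 < κ) (hb : 0 < b) (hba : β * b = a)
    (hV : ∀ᵐ x ∂(volume.restrict R), V x = u x ^ κ * W x ^ β) :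
    wAvg R μ (fun x => V x ^ (-b)) ≤ (essSupE R (fun x => (u x)⁻¹)) ^ (κ * b) *
      (wAvg R μ (fun x => W x ^ (-a))) := by
  have e1 : 0 ≤ κ * b := by positivity
  unfold wAvg
  rw [← mul_div_assoc, ← lintegral_const_mul _ (by fun_prop)]
  apply ENNReal.div_le_div_right
  apply lintegral_mono_ae
  have hs : ∀ᵐ x ∂(volume.restrict R), ENNReal.ofReal (u x)⁻¹ ≤ essSupE R (fun x => (u x)⁻¹) :=
    ENNReal.ae_le_essSup _
  filter_upwards [hup, hWp, hV, hs] with x hx hx2 hx3 hx4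
  rw [← mul_assoc]
  gcongr
  refine le_trans (le_of_eq ?_) (mul_le_mul_left (ENNReal.rpow_le_rpow hx4 e1) _)
  rw [ENNReal.ofReal_rpow_of_pos (by positivity), ← ENNReal.ofReal_mul (by positivity), hx3,
    Real.mul_rpow (by positivity) (by positivity), ← Real.rpow_mul hx.le, ← Real.rpow_mul hx2.le,
    Real.inv_rpow hx.le, ← Real.rpow_neg hx.le, ← hba]
  congr 3 <;> ring

lemma core {X : Type*} [MeasureSpace X] (R : Set X) (μ u W V : X → ℝ)
    (hμ : Measurable μ) (hu : Measurable u) (hW : Measurable W)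
    (hup : ∀ᵐ x ∂(volume.restrict R), 0 < u x) (hWp : ∀ᵐ x ∂(volume.restrict R), 0 < W x)
    (κ β p q a b : ℝ) (hκ : 0 < κ) (hβ : 0 < β) (hp : 0 < p) (hq : 0 < q)
    (hb : 0 < b) (hba : β * b = a)
    (hV : ∀ᵐ x ∂(volume.restrict R), V x = u x ^ κ * W x ^ β)
    (h1 : κ * p + β * p / q = 1) :
    (wAvg R μ (fun x => V x ^ p)) ^ (1 / p) * (wAvg R μ (fun x => V x ^ (-b))) ^ (1 / b) ≤
      (wAvg R μ u * essSupE R (fun x => (u x)⁻¹)) ^ κ *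
      ((wAvg R μ (fun x => W x ^ q)) ^ (1 / q) * (wAvg R μ (fun x => W x ^ (-a))) ^ (1 / a)) ^ β := by
  have hip : 0 < 1 / p := by positivity
  have hib : 0 < 1 / b := by positivity
  by_cases h0 : (∫⁻ x in R, ENNReal.ofReal (μ x)) = 0 ∨ (∫⁻ x in R, ENNReal.ofReal (μ x)) = ∞
  · rw [wAvg_eq_zero_of R μ (fun x => V x ^ p) hμ h0, ENNReal.zero_rpow_of_pos hip, zero_mul]
    exact zero_le
  push Not at h0
  have A := ENNReal.rpow_le_rpow (core_main R μ u W V hμ hu hW hup hWp κ β p q hκ hβ hp hq hV h1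
    h0.1 h0.2) hip.le
  have D := ENNReal.rpow_le_rpow (core_dual R μ u W V hμ hW hup hWp κ β a b hκ hb hba hV) hib.le
  refine (mul_le_mul' A D).trans (le_of_eq ?_)
  have ha : 0 < a := hba ▸ mul_pos hβ hb
  simp only [ENNReal.mul_rpow_of_nonneg _ _ hip.le, ENNReal.mul_rpow_of_nonneg _ _ hib.le,
    ENNReal.mul_rpow_of_nonneg _ _ hκ.le, ENNReal.mul_rpow_of_nonneg _ _ hβ.le,
    ← ENNReal.rpow_mul]
  have r1 : κ * p * (1 / p) = κ := by field_simp
  have r2 : κ * b * (1 / b) = κ := by field_simp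
  have r3 : β * p / q * (1 / p) = 1 / q * β := by field_simp
  have r4 : 1 / a * β = 1 / b := by rw [← hba]; field_simp
  rw [r1, r2, r3, r4]
  ring

lemma dualExp_toReal (p : ℝ≥0∞) (hp : 1 < p) : (dualExp p).toReal = 1 / (1 - p⁻¹.toReal) := by
  unfold dualExp
  rw [if_neg hp.ne']
  by_cases h : p = ∞
  · simp [h]
  have h1 : 1 < p.toReal := by
    have := (ENNReal.toReal_lt_toReal ENNReal.one_ne_top h).2 hp
    simpa using this
  rw [if_neg h, ENNReal.toReal_ofReal (div_nonneg (by linarith) (by linarith)), ENNReal.toReal_inv]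
  have : p.toReal - 1 ≠ 0 := by linarith
  have h3 : p.toReal ≠ 0 := by linarith
  field_simp

/-- the pointwise identity, with `σ, P, A` the reciprocals of the exponents. -/
lemma pointwise_id (σ P A w l n h : ℝ) (hA : 0 ≤ A) (hAP : A < P) (hP1 : P < 1)
    (hQ : 0 < σ + A) (hw : 0 < w) (hl : 0 < l) (hn : 0 < n) (hh : 0 < h) (a b q p s : ℝ)
    (ha : a = 1 / (1 - A)) (hb : b = 1 / (1 - P)) (hq : q = 1 / (σ + A)) (hp : p = 1 / (σ + P))
    (hs : s = 1 / (P - A)) :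
    (h ^ (1 / p) * (n * l ^ (1 / a)) ^ (q / p) * l ^ (-(1 / b))) * w ^ (1 / b) =
      (n ^ (a / (1 + a / q)) * ((n * l ^ (1 / a)) ^ q * l) ^ (1 / (1 + a / q)) *
        h ^ (s / (p * (1 + a / q)))) ^ ((1 + a / q) / s) * (n * w ^ (1 / a)) ^ (a / b) := by
  have x1 : 1 - A ≠ 0 := by linarith
  have x2 : 1 - P ≠ 0 := by linarith
  have x3 : σ + A ≠ 0 := by linarith
  have x4 : σ + P ≠ 0 := by linarith
  have x5 : P - A ≠ 0 := by linarith
  have x6 : 1 + a / q ≠ 0 := by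
    have : 0 < a := by rw [ha]; apply one_div_pos.2; linarith
    have : 0 < q := by rw [hq]; apply one_div_pos.2; linarith
    positivity
  have ha' : a ≠ 0 := by rw [ha]; exact one_div_ne_zero x1
  have hb' : b ≠ 0 := by rw [hb]; exact one_div_ne_zero x2
  have hq' : q ≠ 0 := by rw [hq]; exact one_div_ne_zero x3
  have hp' : p ≠ 0 := by rw [hp]; exact one_div_ne_zero x4
  have hs' : s ≠ 0 := by rw [hs]; exact one_div_ne_zero x5
  have ia : 1 / a = 1 - A := by rw [ha, one_div_one_div]
  have ib : 1 / b = 1 - P := by rw [hb, one_div_one_div]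
  have iq : 1 / q = σ + A := by rw [hq, one_div_one_div]
  have ip : 1 / p = σ + P := by rw [hp, one_div_one_div]
  have is : 1 / s = P - A := by rw [hs, one_div_one_div]
  have c1 : 1 / p = 1 / q + 1 / s := by rw [ip, iq, is]; ring
  have c2 : 1 / a = 1 / b + 1 / s := by rw [ia, ib, is]; ring
  generalize ht : 1 + a / q = t at *
  apply Real.log_injOn_pos (Set.mem_Ioi.2 (by positivity)) (Set.mem_Ioi.2 (by positivity))
  have L : ∀ x y : ℝ, 0 < x → 0 < y → Real.log (x * y) = Real.log x + Real.log y :=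
    fun x y hx hy => Real.log_mul hx.ne' hy.ne'
  rw [L _ _ (by positivity) (by positivity), L _ _ (by positivity) (by positivity),
    L _ _ (by positivity) (by positivity), L _ _ (by positivity) (by positivity),
    Real.log_rpow hh, Real.log_rpow (by positivity), Real.log_rpow hl, Real.log_rpow hw,
    Real.log_rpow (by positivity), Real.log_rpow (by positivity),
    L _ _ (by positivity) (by positivity), L _ _ (by positivity) (by positivity),
    L _ _ (by positivity) (by positivity), L _ _ (by positivity) (by positivity),
    Real.log_rpow hh, Real.log_rpow hw, Real.log_rpow hn, Real.log_rpow (by positivity),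
    Real.log_rpow (by positivity),
    L _ _ (by positivity) hl, Real.log_rpow (by positivity),
    L _ _ (by positivity) (by positivity), Real.log_rpow hl]
  generalize Real.log h = h, Real.log n = n, Real.log l = l, Real.log w = w
  have e1 : q / p = 1 + q / s := by
    have : q / p = q * (1 / p) := by ring
    rw [this, c1]; field_simp
  have e2 : a / b = 1 - a / s := by
    have : a / b = a * (1 / b) := by ring
    have c2' : 1 / b = 1 / a - 1 / s := by linarith
    rw [this, c2']; field_simp
  have e3 : 1 / b = 1 / a - 1 / s := by linarith
  rw [e1, e2, e3]
  field_simp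
  ring

/-- Weight verification in the extrapolation proof, case `q_n > p_n`.
Here `pother` lists the exponents `p_1,…,p_{n-1}`; `1/p = ∑ 1/p_i + 1/p_n > 0`,
`1/q = 1/p - 1/p_n + 1/q_n > 0`, `1/s = 1/p_n - 1/q_n`.  If `W_w = w_n ŵ^{1/q_n'}`
belongs to `A_{q_n,q}(ŵ)` and `H > 0` satisfies the stated `A_1(ŵ)` control with
constant `N`, then `v_n := H^{1/p} W_λ^{q/p} ŵ_λ^{-1/p_n'}` satisfies
`[v_n ŵ^{1/p_n'}]_{A_{p_n,p}(ŵ)} ≤ C(N) [W_w]_{A_{q_n,q}(ŵ)}^{q_n'/p_n'}`. -/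
theorem statement15 {d₁ d₂ m : ℕ}
    (pother : Fin m → ℝ≥0∞) (hpo : ∀ i, 1 ≤ pother i)
    (pn qn : ℝ≥0∞) (hpn : 1 < pn) (hpnqn : pn < qn)
    (hinvP : 0 < (∑ i, (pother i)⁻¹) + pn⁻¹)
    (hinvQ : 0 < (∑ i, (pother i)⁻¹) + qn⁻¹)
    (N : ℝ≥0∞) (hN : N < ∞) :
    ∃ C : ℝ≥0∞, C < ∞ ∧
      ∀ what whatl wn H : Pt d₁ d₂ → ℝ,
        Measurable what → Measurable whatl → Measurable wn → Measurable H →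
        (∀ᵐ x ∂(volume : Measure (Pt d₁ d₂)), 0 < what x) →
        (∀ᵐ x ∂(volume : Measure (Pt d₁ d₂)), 0 < whatl x) →
        (∀ᵐ x ∂(volume : Measure (Pt d₁ d₂)), 0 < wn x) →
        (∀ᵐ x ∂(volume : Measure (Pt d₁ d₂)), 0 < H x) →
        -- `W_w ∈ A_{q_n, q}(ŵ)`
        AqRect qn (((∑ i, (pother i)⁻¹) + qn⁻¹)⁻¹) what
            (fun x => wn x * what x ^ (1 / (dualExp qn).toReal)) < ∞ →
        -- the `A_1(ŵ)` control on `w_n^{q_n'/(1+q_n'/q)} (W_λ^q ŵ_λ)^{1/(1+q_n'/q)}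
        --   H^{s/(p(1+q_n'/q))}` with constant `N`
        A1wRect what
            (fun x =>
              wn x ^ ((dualExp qn).toReal /
                  (1 + (dualExp qn).toReal /
                    ((((∑ i, (pother i)⁻¹) + qn⁻¹)⁻¹).toReal))) *
              ((wn x * whatl x ^ (1 / (dualExp qn).toReal)) ^
                    ((((∑ i, (pother i)⁻¹) + qn⁻¹)⁻¹).toReal) * whatl x) ^
                  (1 / (1 + (dualExp qn).toReal /
                    ((((∑ i, (pother i)⁻¹) + qn⁻¹)⁻¹).toReal))) *
              H x ^ (((pn⁻¹ - qn⁻¹)⁻¹).toReal /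
                  (((((∑ i, (pother i)⁻¹) + pn⁻¹)⁻¹).toReal) *
                    (1 + (dualExp qn).toReal /
                      ((((∑ i, (pother i)⁻¹) + qn⁻¹)⁻¹).toReal)))))
          ≤ N →
        -- conclusion: `v_n ŵ^{1/p_n'} ∈ A_{p_n,p}(ŵ)` quantitatively
        AqRect pn (((∑ i, (pother i)⁻¹) + pn⁻¹)⁻¹) what
            (fun x =>
              (H x ^ (1 / ((((∑ i, (pother i)⁻¹) + pn⁻¹)⁻¹).toReal)) *
                (wn x * whatl x ^ (1 / (dualExp qn).toReal)) ^
                  ((((∑ i, (pother i)⁻¹) + qn⁻¹)⁻¹).toReal /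
                    (((∑ i, (pother i)⁻¹) + pn⁻¹)⁻¹).toReal) *
                whatl x ^ (-(1 / (dualExp pn).toReal))) *
              what x ^ (1 / (dualExp pn).toReal))
          ≤ C *
            (AqRect qn (((∑ i, (pother i)⁻¹) + qn⁻¹)⁻¹) what
                (fun x => wn x * what x ^ (1 / (dualExp qn).toReal))) ^
              ((dualExp qn).toReal / (dualExp pn).toReal) := by
  have hqn : 1 < qn := hpn.trans hpnqn
  have hσt : (∑ i, (pother i)⁻¹) ≠ ∞ := by
    apply ENNReal.sum_ne_top.2
    intro i _
    exact ENNReal.inv_ne_top.2 (zero_lt_one.trans_le (hpo i)).ne'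
  have hpi : pn⁻¹ ≠ ∞ := ENNReal.inv_ne_top.2 (zero_lt_one.trans hpn).ne'
  have hqi : qn⁻¹ ≠ ∞ := ENNReal.inv_ne_top.2 (zero_lt_one.trans hqn).ne'
  have hlt : qn⁻¹ < pn⁻¹ := ENNReal.inv_lt_inv.2 hpnqn
  have hpE : (((∑ i, (pother i)⁻¹) + pn⁻¹)⁻¹) ≠ ∞ := ENNReal.inv_ne_top.2 hinvP.ne'
  have hqE : (((∑ i, (pother i)⁻¹) + qn⁻¹)⁻¹) ≠ ∞ := ENNReal.inv_ne_top.2 hinvQ.ne'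
  have hQ' : 0 < (∑ i, (pother i)⁻¹).toReal + qn⁻¹.toReal := by
    rw [← ENNReal.toReal_add hσt hqi]
    exact ENNReal.toReal_pos hinvQ.ne' (ENNReal.add_ne_top.2 ⟨hσt, hqi⟩)
  have hA : 0 ≤ qn⁻¹.toReal := ENNReal.toReal_nonneg
  have hAP : qn⁻¹.toReal < pn⁻¹.toReal := (ENNReal.toReal_lt_toReal hqi hpi).2 hlt
  have hP1 : pn⁻¹.toReal < 1 := by
    have := (ENNReal.toReal_lt_toReal hpi ENNReal.one_ne_top).2 (ENNReal.inv_lt_one.2 hpn)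
    simpa using this
  have hp : (((∑ i, (pother i)⁻¹) + pn⁻¹)⁻¹).toReal =
      1 / ((∑ i, (pother i)⁻¹).toReal + pn⁻¹.toReal) := by
    rw [ENNReal.toReal_inv, ENNReal.toReal_add hσt hpi, one_div]
  have hq : (((∑ i, (pother i)⁻¹) + qn⁻¹)⁻¹).toReal =
      1 / ((∑ i, (pother i)⁻¹).toReal + qn⁻¹.toReal) := by
    rw [ENNReal.toReal_inv, ENNReal.toReal_add hσt hqi, one_div]
  have hs : ((pn⁻¹ - qn⁻¹)⁻¹).toReal = 1 / (pn⁻¹.toReal - qn⁻¹.toReal) := by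
    rw [ENNReal.toReal_inv, ENNReal.toReal_sub_of_le hlt.le hpi, one_div]
  have ha := dualExp_toReal qn hqn
  have hb := dualExp_toReal pn hpn
  simp only [AqRect, A1wRect, AqRatio, if_neg hpE, if_neg hqE, if_neg hpn.ne', if_neg hqn.ne']
  generalize (((∑ i, (pother i)⁻¹) + pn⁻¹)⁻¹).toReal = p at *
  generalize (((∑ i, (pother i)⁻¹) + qn⁻¹)⁻¹).toReal = q at *
  generalize ((pn⁻¹ - qn⁻¹)⁻¹).toReal = s at *
  generalize (dualExp qn).toReal = a at *
  generalize (dualExp pn).toReal = b at *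
  generalize (∑ i, (pother i)⁻¹).toReal = σ at *
  generalize pn⁻¹.toReal = P at *
  generalize qn⁻¹.toReal = A at *
  have pa : 0 < a := by rw [ha]; apply one_div_pos.2; linarith
  have pb : 0 < b := by rw [hb]; apply one_div_pos.2; linarith
  have pq : 0 < q := by rw [hq]; apply one_div_pos.2; linarith
  have pp : 0 < p := by rw [hp]; apply one_div_pos.2; linarith
  have ps : 0 < s := by rw [hs]; apply one_div_pos.2; linarith
  have hκ : 0 < (1 + a / q) / s := by positivity
  have h1 : (1 + a / q) / s * p + a / b * p / q = 1 := by
    have x1 : 1 - A ≠ 0 := by linarith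
    have x2 : 1 - P ≠ 0 := by linarith
    have x3 : σ + A ≠ 0 := by linarith
    have x4 : σ + P ≠ 0 := by linarith
    have x5 : P - A ≠ 0 := by linarith
    rw [ha, hb, hp, hq, hs]
    field_simp
    ring
  refine ⟨N ^ ((1 + a / q) / s), ENNReal.rpow_lt_top_of_nonneg hκ.le hN.ne, ?_⟩
  intro w l n H mw ml mn mH pw pl pn' pH _ hN1
  refine iSup₂_le fun R hR => ?_
  refine (core R w _ (fun x => n x * w x ^ (1 / a)) _ mw ?_ (by fun_prop) ?_ ?_
    ((1 + a / q) / s) (a / b) p q a b hκ (by positivity) pp pq pb (by field_simp)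
    (ae_restrict_of_ae ?_) h1).trans (mul_le_mul' (ENNReal.rpow_le_rpow
      ((le_iSup₂_of_le R hR le_rfl).trans hN1) hκ.le)
      (ENNReal.rpow_le_rpow (le_iSup₂_of_le (f := fun R (_ : IsRect R) =>
        (wAvg R w fun x => (n x * w x ^ (1 / a)) ^ q) ^ (1 / q) *
        (wAvg R w fun x => (n x * w x ^ (1 / a)) ^ (-a)) ^ (1 / a)) R hR le_rfl) (by positivity)))
  · fun_prop
  · apply ae_restrict_of_ae
    filter_upwards [pl, pn', pH] with x h1 h2 h3
    positivity
  · apply ae_restrict_of_ae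
    filter_upwards [pw, pn'] with x h1 h2
    positivity
  · filter_upwards [pw, pl, pn', pH] with x x1 x2 x3 x4
    exact pointwise_id σ P A (w x) (l x) (n x) (H x) hA hAP hP1 hQ' x1 x2 x3 x4 a b q p s
      ha hb hq hp hs
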